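/- arXiv:1010.3877 — 2 statements merged into one kernel-verified Lean document; each statement's English description precedes it below -/
import Mathlib

section
/- Let k ∈ [0,1) and let S be a weakly regular AG-groupoid with a left identity e. If f is an (∈,∈∨q_k)-fuzzy left ideal of S and g is an (∈,∈∨q_k)-fuzzy right ideal of S, then the product f ∘ g is an (∈,∈∨q_k)-fuzzy two-sided ideal of S, i.e., (f ∘ g)(ab) ≥ min((f ∘ g)(b), (1−k)/2) and (f ∘ g)(ab) ≥ min((f ∘ g)(a), (1−k)/2) for all a, b ∈ S. -/
/-- An AG-groupoid: a magma satisfying the left invertive law `(ab)c = (cb)a`. -/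
def LeftInvertive (S : Type*) [Mul S] : Prop := ∀ a b c : S, a * b * c = c * b * a

/-- A fuzzy subset: a function into `[0,1]`. -/
def IsFuzzy {S : Type*} (f : S → ℝ) : Prop := ∀ x, 0 ≤ f x ∧ f x ≤ 1

/-- A weakly regular AG-groupoid: each `a` satisfies `a = (ax)(ay)` for some `x, y`. -/
def WeaklyRegular (S : Type*) [Mul S] : Prop := ∀ a : S, ∃ x y : S, a = a * x * (a * y)

/-- The product of fuzzy subsets: `(f ∘ g)(a)` is the supremum of `min(f b, g c)` over
factorizations `a = b * c` (the empty supremum in `ℝ` is `0`). -/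
noncomputable def fuzzyProd {S : Type*} [Mul S] (f g : S → ℝ) (a : S) : ℝ :=
  sSup {v : ℝ | ∃ b c : S, a = b * c ∧ v = min (f b) (g c)}

/-- The constant fuzzy subset `1`. -/
def fuzzyOne (S : Type*) : S → ℝ := fun _ => 1

/-- An `(∈,∈∨q_k)`-fuzzy left ideal of an AG-groupoid. -/
def FuzzyLeftIdealK {S : Type*} [Mul S] (k : ℝ) (f : S → ℝ) : Prop :=
  ∀ x y : S, min (f y) ((1 - k) / 2) ≤ f (x * y)

/-- An `(∈,∈∨q_k)`-fuzzy right ideal of an AG-groupoid. -/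
def FuzzyRightIdealK {S : Type*} [Mul S] (k : ℝ) (f : S → ℝ) : Prop :=
  ∀ x y : S, min (f x) ((1 - k) / 2) ≤ f (x * y)

/-- An `(∈,∈∨q_k)`-fuzzy generalized bi-ideal of an AG-groupoid. -/
def FuzzyGenBiIdealK {S : Type*} [Mul S] (k : ℝ) (f : S → ℝ) : Prop :=
  ∀ x y z : S, min (min (f x) (f z)) ((1 - k) / 2) ≤ f (x * y * z)

/-- An `(∈,∈∨q_k)`-fuzzy bi-ideal of an AG-groupoid. -/
def FuzzyBiIdealK {S : Type*} [Mul S] (k : ℝ) (f : S → ℝ) : Prop :=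
  (∀ x y : S, min (min (f x) (f y)) ((1 - k) / 2) ≤ f (x * y)) ∧
  FuzzyGenBiIdealK k f

/-- An `(∈,∈∨q_k)`-fuzzy quasi-ideal of an AG-groupoid. -/
def FuzzyQuasiIdealK {S : Type*} [Mul S] (k : ℝ) (f : S → ℝ) : Prop :=
  ∀ x : S,
    min (min (fuzzyProd f (fuzzyOne S) x) (fuzzyProd (fuzzyOne S) f x)) ((1 - k) / 2) ≤ f x

/-- `f_k`. -/
noncomputable def subK {S : Type*} (k : ℝ) (f : S → ℝ) : S → ℝ := fun a => min (f a) ((1 - k) / 2)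

/-- `f ∧_k g`. -/
noncomputable def andK {S : Type*} (k : ℝ) (f g : S → ℝ) : S → ℝ :=
  fun a => min (min (f a) (g a)) ((1 - k) / 2)

/-- `f ∘_k g`. -/
noncomputable def prodK {S : Type*} [Mul S] (k : ℝ) (f g : S → ℝ) : S → ℝ :=
  fun a => min (fuzzyProd f g a) ((1 - k) / 2)

/-- A regular AG-groupoid: each `a` satisfies `a = (ax)a` for some `x`. -/
def RegularAG (S : Type*) [Mul S] : Prop := ∀ a : S, ∃ x : S, a = a * x * a

/-- An intra-regular AG-groupoid: each `a` satisfies `a = (x(aa))y` for some `x, y`. -/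
def IntraRegularAG (S : Type*) [Mul S] : Prop :=
  ∀ a : S, ∃ x y : S, a = x * (a * a) * y

/-!
If `e` is a left identity, then `xy = (yx)e`, so right ideals are left ideals, and left ideals are
right ideals as soon as every `ae` lies in `Sa`; in a weakly regular `S`, `a = (ax)(ay)` gives
`ae = (ay)(ax) = ((ax)y)a`. The factorizations `x(bc) = b(xc)` and `(bc)y = (be)(cy)` then carry
each term of the supremum defining `f ∘ g` at `bc` to a term at `x(bc)`, respectively `(bc)y`.
-/

section LeftInvertive

variable {S : Type*} [Mul S] {e : S}

theorem LeftInvertive.mul_mul_mul_comm (hS : LeftInvertive S) (a b c d : S) :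
    a * b * (c * d) = a * c * (b * d) :=
  calc a * b * (c * d) = c * d * b * a := hS a b (c * d)
    _ = b * d * c * a := by rw [hS c d b]
    _ = a * c * (b * d) := hS (b * d) c a

theorem LeftInvertive.mul_left_comm (hS : LeftInvertive S) (he : ∀ x : S, e * x = x)
    (a b c : S) : a * (b * c) = b * (a * c) := by
  simpa only [he] using hS.mul_mul_mul_comm e a b c

theorem LeftInvertive.mul_eq_swap_mul (hS : LeftInvertive S) (he : ∀ x : S, e * x = x)
    (x y : S) : x * y = y * x * e := by
  simpa only [he] using hS e x y

theorem WeaklyRegular.exists_mul_eq_mul_self (hwr : WeaklyRegular S) (hS : LeftInvertive S)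
    (he : ∀ x : S, e * x = x) (a : S) : ∃ s : S, a * e = s * a := by
  obtain ⟨x, y, hxy⟩ := hwr a
  refine ⟨a * x * y, ?_⟩
  calc a * e = a * x * (a * y) * e := by rw [← hxy]
    _ = a * y * (a * x) := (hS.mul_eq_swap_mul he _ _).symm
    _ = a * x * y * a := hS a y (a * x)

end LeftInvertive

section Ideals

variable {S : Type*} [Mul S] {e : S} {k : ℝ} {f : S → ℝ}

theorem FuzzyRightIdealK.fuzzyLeftIdealK (hf : FuzzyRightIdealK k f) (hS : LeftInvertive S)
    (he : ∀ x : S, e * x = x) : FuzzyLeftIdealK k f := by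
  intro x y
  rw [hS.mul_eq_swap_mul he]
  exact (le_min (hf y x) (min_le_right _ _)).trans (hf (y * x) e)

theorem FuzzyLeftIdealK.fuzzyRightIdealK (hf : FuzzyLeftIdealK k f) (hS : LeftInvertive S)
    (he : ∀ x : S, e * x = x) (hmul : ∀ a : S, ∃ s : S, a * e = s * a) :
    FuzzyRightIdealK k f := by
  intro x y
  obtain ⟨s, hs⟩ := hmul (y * x)
  rw [hS.mul_eq_swap_mul he, hs]
  exact (le_min (hf y x) (min_le_right _ _)).trans (hf s (y * x))

end Ideals

section Product

theorem IsFuzzy.bddAbove_range {S : Type*} {f : S → ℝ} (hf : IsFuzzy f) :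
    BddAbove (Set.range f) :=
  ⟨1, Set.forall_mem_range.2 fun x => (hf x).2⟩

variable {S : Type*} [Mul S] {e : S} {k : ℝ} {f g : S → ℝ}

theorem min_le_fuzzyProd_mul (hf : BddAbove (Set.range f)) (b c : S) :
    min (f b) (g c) ≤ fuzzyProd f g (b * c) := by
  obtain ⟨M, hM⟩ := hf
  refine le_csSup ⟨M, ?_⟩ ⟨b, c, rfl, rfl⟩
  rintro _ ⟨b', c', -, rfl⟩
  exact (min_le_left _ _).trans (hM (Set.mem_range_self b'))

theorem min_fuzzyProd_le {a : S} {t r : ℝ} (ha : ∃ b c : S, a = b * c)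
    (h : ∀ b c : S, a = b * c → min (min (f b) (g c)) t ≤ r) :
    min (fuzzyProd f g a) t ≤ r := by
  rcases le_or_gt t r with htr | hrt
  · exact min_le_of_right_le htr
  · obtain ⟨b, c, hbc⟩ := ha
    refine min_le_of_left_le (csSup_le ⟨_, b, c, hbc, rfl⟩ ?_)
    rintro _ ⟨b', c', hbc', rfl⟩
    exact (min_le_iff.1 (h b' c' hbc')).resolve_right hrt.not_ge

theorem min_fuzzyProd_le_fuzzyProd {a z : S} {t : ℝ} (hf : BddAbove (Set.range f))
    (ha : ∃ b c : S, a = b * c)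
    (h : ∀ b c : S, a = b * c →
      ∃ b' c' : S, z = b' * c' ∧ min (f b) t ≤ f b' ∧ min (g c) t ≤ g c') :
    min (fuzzyProd f g a) t ≤ fuzzyProd f g z := by
  refine min_fuzzyProd_le ha fun b c hbc => ?_
  obtain ⟨b', c', rfl, hb, hc⟩ := h b c hbc
  calc min (min (f b) (g c)) t = min (min (f b) t) (min (g c) t) := inf_inf_distrib_right _ _ _
    _ ≤ min (f b') (g c') := min_le_min hb hc
    _ ≤ fuzzyProd f g (b' * c') := min_le_fuzzyProd_mul hf b' c'

theorem fuzzyLeftIdealK_fuzzyProd (hS : LeftInvertive S) (he : ∀ x : S, e * x = x)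
    (hf : BddAbove (Set.range f)) (hg : FuzzyLeftIdealK k g) :
    FuzzyLeftIdealK k (fuzzyProd f g) := by
  intro x y
  refine min_fuzzyProd_le_fuzzyProd hf ⟨e, y, (he y).symm⟩ ?_
  rintro b c rfl
  exact ⟨b, x * c, hS.mul_left_comm he x b c, min_le_left _ _, hg x c⟩

theorem fuzzyRightIdealK_fuzzyProd (hS : LeftInvertive S) (he : ∀ x : S, e * x = x)
    (hf : BddAbove (Set.range f)) (hfr : FuzzyRightIdealK k f) (hgr : FuzzyRightIdealK k g) :
    FuzzyRightIdealK k (fuzzyProd f g) := by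
  intro x y
  refine min_fuzzyProd_le_fuzzyProd hf ⟨e, x, (he x).symm⟩ ?_
  rintro b c rfl
  have hfactor : b * c * y = b * e * (c * y) := by rw [hS.mul_mul_mul_comm b e c y, he]
  exact ⟨b * e, c * y, hfactor, hfr b e, hgr c y⟩

end Product

theorem fuzzyProd_left_right_two_sided_general {S : Type*} [Mul S] (hS : LeftInvertive S)
    (k : ℝ) (e : S) (he : ∀ x : S, e * x = x) (hmul : ∀ a : S, ∃ s : S, a * e = s * a)
    (f g : S → ℝ) (hf : BddAbove (Set.range f))
    (hfl : FuzzyLeftIdealK k f) (hgr : FuzzyRightIdealK k g) :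
    FuzzyLeftIdealK k (fuzzyProd f g) ∧ FuzzyRightIdealK k (fuzzyProd f g) :=
  ⟨fuzzyLeftIdealK_fuzzyProd hS he hf (hgr.fuzzyLeftIdealK hS he),
    fuzzyRightIdealK_fuzzyProd hS he hf (hfl.fuzzyRightIdealK hS he hmul) hgr⟩

/-- in a weakly regular AG-groupoid with left identity, the product of an
`(∈,∈∨q_k)`-fuzzy left ideal and an `(∈,∈∨q_k)`-fuzzy right ideal is an
`(∈,∈∨q_k)`-fuzzy two-sided ideal. -/
theorem fuzzyProd_left_right_two_sided {S : Type*} [Mul S] (hS : LeftInvertive S)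
    (k : ℝ) (hk0 : 0 ≤ k) (hk1 : k < 1)
    (e : S) (he : ∀ x : S, e * x = x) (hwr : WeaklyRegular S)
    (f g : S → ℝ) (hf : IsFuzzy f) (hg : IsFuzzy g)
    (hfl : FuzzyLeftIdealK k f) (hgr : FuzzyRightIdealK k g) :
    FuzzyLeftIdealK k (fuzzyProd f g) ∧ FuzzyRightIdealK k (fuzzyProd f g) :=
  fuzzyProd_left_right_two_sided_general hS k e he (hwr.exists_mul_eq_mul_self hS he) f g
    hf.bddAbove_range hfl hgr
end

section
/- Let k ∈ [0,1) and let S be a weakly regular AG-groupoid with a left identity e. Then the following conditions are equivalent: (i) S is regular; (ii) f_k = (f ∘_k 1) ∘_k f for every (∈,∈∨q_k)-fuzzy generalized bi-ideal f of S; (iii) f_k = (f ∘_k 1) ∘_k f for every (∈,∈∨q_k)-fuzzy bi-ideal f of S; (iv) f_k = (f ∘_k 1) ∘_k f for every (∈,∈∨q_k)-fuzzy quasi-ideal f of S. -/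
/-!
In an AG-groupoid with left identity, `a ∈ ((Sa)S)(Sa)` already forces `a = (ax)a` for some `x`.
Since `Sa` is a left ideal containing `a`, testing `f_k = (f ∘_k 1) ∘_k f` on the indicators of
these left ideals gives regularity, and fuzzy left ideals are at the same time fuzzy bi-ideals and
fuzzy quasi-ideals. Conversely, regularity gives `f_k ≤ (f ∘_k 1) ∘_k f` for every `f`, and the
other inequality is the generalized bi-ideal condition. Weak regularity yields `Sa ⊆ aS`, which
turns fuzzy quasi-ideals into fuzzy generalized bi-ideals.
-/

namespace LeftInvertive

variable {S : Type*} [Mul S] {e : S}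

theorem medial (hS : LeftInvertive S) (a b c d : S) :
    a * b * (c * d) = a * c * (b * d) := by
  rw [hS a b (c * d), hS c d b, hS (b * d) c a]

protected theorem mul_left_comm_s16 (hS : LeftInvertive S) (he : ∀ x : S, e * x = x) (a b c : S) :
    a * (b * c) = b * (a * c) := by
  simpa only [he] using hS.medial e a b c

theorem mul_mul_leftId (hS : LeftInvertive S) (he : ∀ x : S, e * x = x) (a b : S) :
    a * b * e = b * a := by
  rw [hS, he]

theorem paramedial (hS : LeftInvertive S) (he : ∀ x : S, e * x = x) (a b c d : S) :
    a * b * (c * d) = d * c * (b * a) := by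
  rw [← hS.mul_mul_leftId he d c, hS.mul_left_comm_s16 he, hS.mul_mul_leftId he]

theorem mul_mul_eq_mul_leftId_mul (hS : LeftInvertive S) (he : ∀ x : S, e * x = x)
    (a b c : S) : a * (b * c) = a * e * b * c := by
  rw [hS (a * e) b c, hS.mul_left_comm_s16 he (c * b), hS.mul_mul_leftId he]

theorem exists_eq_mul_mul_self_of_eq_mul_mul_mul (hS : LeftInvertive S)
    (he : ∀ x : S, e * x = x) {a t v : S} (h : a = a * t * (v * a)) : ∃ x, a = a * x * a := by
  have hva : v * a = a * t * (v * (v * a)) := by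
    rw [hS.mul_left_comm_s16 he, ← h]
  have hvat : v * a * t = a * (t * (v * (v * a)) * t) :=
    calc v * a * t = a * t * (v * (v * a)) * t := by rw [← hva]
      _ = t * (v * (v * a)) * (a * t) := hS _ _ _
      _ = a * (t * (v * (v * a)) * t) := hS.mul_left_comm_s16 he _ _ _
  refine ⟨t * (v * (v * a)) * t, ?_⟩
  rw [← hvat, ← hS, ← h]

theorem exists_eq_mul_mul_self_of_eq_mul_mul_mul_mul (hS : LeftInvertive S)
    (he : ∀ x : S, e * x = x) {a s t u : S} (h : a = s * a * t * (u * a)) : ∃ x, a = a * x * a := by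
  refine hS.exists_eq_mul_mul_self_of_eq_mul_mul_mul he (t := t) (v := u * e * s) ?_
  calc a = s * a * t * (u * a) := h
    _ = u * (s * a * t * a) := hS.mul_left_comm_s16 he _ _ _
    _ = u * (a * t * (s * a)) := by rw [hS (s * a)]
    _ = u * (s * (a * t * a)) := by rw [hS.mul_left_comm_s16 he (a * t)]
    _ = u * e * s * (a * t * a) := hS.mul_mul_eq_mul_leftId_mul he _ _ _
    _ = a * t * (u * e * s * a) := hS.mul_left_comm_s16 he _ _ _

end LeftInvertive

theorem WeaklyRegular.exists_mul_eq_mul {S : Type*} [Mul S] {e : S} (hwr : WeaklyRegular S)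
    (hS : LeftInvertive S) (he : ∀ x : S, e * x = x) (s a : S) : ∃ w, s * a = a * w := by
  obtain ⟨x, y, hxy⟩ := hwr a
  have ha : a = a * a * (x * y) := by rwa [hS.medial] at hxy
  refine ⟨x * y * s * a, ?_⟩
  calc s * a = s * (a * a * (x * y)) := by rw [← ha]
    _ = a * a * (s * (x * y)) := hS.mul_left_comm_s16 he _ _ _
    _ = x * y * s * (a * a) := hS.paramedial he _ _ _ _
    _ = a * (x * y * s * a) := hS.mul_left_comm_s16 he _ _ _

section FuzzyProduct

variable {S : Type*} [Mul S] {f g h : S → ℝ} {k r : ℝ} {a : S}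

theorem min_le_fuzzyProd {C : ℝ} (hf : ∀ x, f x ≤ C) (b c : S) :
    min (f b) (g c) ≤ fuzzyProd f g (b * c) := by
  refine le_csSup ⟨C, ?_⟩ ⟨b, c, rfl, rfl⟩
  rintro v ⟨b', c', _, rfl⟩
  exact min_le_of_left_le (hf b')

theorem le_fuzzyProd_fuzzyOne (hf : ∀ x, f x ≤ 1) (b c : S) :
    f b ≤ fuzzyProd f (fuzzyOne S) (b * c) :=
  (le_min le_rfl (hf b)).trans (min_le_fuzzyProd (g := fuzzyOne S) hf b c)

theorem le_fuzzyOne_fuzzyProd (hf : ∀ x, f x ≤ 1) (b c : S) :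
    f c ≤ fuzzyProd (fuzzyOne S) f (b * c) :=
  (le_min (hf c) le_rfl).trans (min_le_fuzzyProd (f := fuzzyOne S) (fun _ => le_rfl) b c)

theorem exists_eq_mul_of_lt_fuzzyProd (hr : 0 ≤ r) (hlt : r < fuzzyProd f g a) :
    ∃ b c, a = b * c ∧ r < f b ∧ r < g c := by
  by_contra! hle
  refine hlt.not_ge (Real.sSup_le ?_ hr)
  rintro v ⟨b, c, hbc, rfl⟩
  exact min_le_iff.mpr (or_iff_not_imp_left.mpr fun hb => hle b c hbc (not_le.mp hb))

theorem exists_eq_mul_mul_of_lt_prodK_prodK (hr : 0 ≤ r)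
    (hlt : r < prodK k (prodK k f g) h a) :
    ∃ b c d, a = b * c * d ∧ r < f b ∧ r < g c ∧ r < h d := by
  obtain ⟨p, d, rfl, hp, hd⟩ := exists_eq_mul_of_lt_fuzzyProd hr (lt_min_iff.mp hlt).1
  obtain ⟨b, c, rfl, hb, hc⟩ := exists_eq_mul_of_lt_fuzzyProd hr (lt_min_iff.mp hp).1
  exact ⟨b, c, d, rfl, hb, hc, hd⟩

theorem RegularAG.subK_le_prodK (hreg : RegularAG S) (hf : ∀ x, f x ≤ 1) :
    subK k f ≤ prodK k (prodK k f (fuzzyOne S)) f := by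
  intro a
  obtain ⟨x, hx⟩ := hreg a
  have hfax : subK k f a ≤ prodK k f (fuzzyOne S) (a * x) :=
    min_le_min_right _ (le_fuzzyProd_fuzzyOne hf a x)
  refine le_min ?_ (min_le_right _ _)
  calc subK k f a ≤ min (prodK k f (fuzzyOne S) (a * x)) (f a) := le_min hfax (min_le_left _ _)
    _ ≤ fuzzyProd (prodK k f (fuzzyOne S)) f (a * x * a) :=
      min_le_fuzzyProd (fun _ => min_le_right _ _) _ _
    _ = fuzzyProd (prodK k f (fuzzyOne S)) f a := by rw [← hx]

theorem FuzzyGenBiIdealK.prodK_le_subK (hb : FuzzyGenBiIdealK k f) (hf : ∀ x, 0 ≤ f x) :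
    prodK k (prodK k f g) f ≤ subK k f := by
  intro a
  refine le_min ?_ (min_le_right _ _)
  by_contra! hlt
  have hk : f a < (1 - k) / 2 := hlt.trans_le (min_le_right _ _)
  obtain ⟨x, y, z, rfl, hx, -, hz⟩ := exists_eq_mul_mul_of_lt_prodK_prodK (hf a) hlt
  exact (hb x y z).not_gt (lt_min (lt_min hx hz) hk)

theorem FuzzyGenBiIdealK.subK_eq_prodK (hb : FuzzyGenBiIdealK k f) (hreg : RegularAG S)
    (hf : IsFuzzy f) : subK k f = prodK k (prodK k f (fuzzyOne S)) f :=
  le_antisymm (hreg.subK_le_prodK fun x => (hf x).2) (hb.prodK_le_subK fun x => (hf x).1)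

theorem FuzzyQuasiIdealK.fuzzyGenBiIdealK (hq : FuzzyQuasiIdealK k f) (hS : LeftInvertive S)
    (hSa : ∀ s a : S, ∃ w, s * a = a * w) (hf : ∀ x, f x ≤ 1) : FuzzyGenBiIdealK k f := by
  intro x y z
  have hx : f x ≤ fuzzyProd f (fuzzyOne S) (x * y * z) := by
    obtain ⟨w, hw⟩ := hSa (z * y) x
    rw [hS x y z, hw]
    exact le_fuzzyProd_fuzzyOne hf x w
  have hz : f z ≤ fuzzyProd (fuzzyOne S) f (x * y * z) := le_fuzzyOne_fuzzyProd hf (x * y) z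
  exact (min_le_min_right _ (min_le_min hx hz)).trans (hq (x * y * z))

end FuzzyProduct

section FuzzyLeftIdeal

variable {S : Type*} [Mul S] {f : S → ℝ} {k : ℝ}

theorem FuzzyLeftIdealK.fuzzyBiIdealK (hl : FuzzyLeftIdealK k f) : FuzzyBiIdealK k f :=
  ⟨fun x y => (min_le_min_right _ (min_le_right _ _)).trans (hl x y),
    fun x y z => (min_le_min_right _ (min_le_right _ _)).trans (hl (x * y) z)⟩

theorem FuzzyLeftIdealK.fuzzyQuasiIdealK (hl : FuzzyLeftIdealK k f) (hf : ∀ x, 0 ≤ f x) :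
    FuzzyQuasiIdealK k f := by
  intro x
  by_contra! hlt
  obtain ⟨hprod, hk⟩ := lt_min_iff.mp hlt
  obtain ⟨b, c, rfl, -, hc⟩ := exists_eq_mul_of_lt_fuzzyProd (hf x) (lt_min_iff.mp hprod).2
  exact (hl b c).not_gt (lt_min hc hk)

theorem isFuzzy_indicator_one {α : Type*} (A : Set α) : IsFuzzy (A.indicator (1 : α → ℝ)) :=
  fun x => ⟨Set.indicator_nonneg (fun _ _ => zero_le_one) x,
    Set.indicator_le_self' (fun _ _ => zero_le_one) x⟩

theorem fuzzyLeftIdealK_indicator_one {A : Set S} (hA : ∀ s, ∀ a ∈ A, s * a ∈ A) :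
    FuzzyLeftIdealK k (A.indicator 1) := by
  intro x y
  by_cases hy : y ∈ A
  · rw [Set.indicator_of_mem hy, Set.indicator_of_mem (hA x y hy)]
    exact min_le_left _ _
  · rw [Set.indicator_of_notMem hy]
    exact min_le_of_left_le ((isFuzzy_indicator_one A) (x * y)).1

theorem exists_eq_mul_mul_of_subK_indicator_one_eq (hk : k < 1) {A : Set S} {a : S} (ha : a ∈ A)
    (hA : subK k (A.indicator 1) = prodK k (prodK k (A.indicator 1) (fuzzyOne S)) (A.indicator 1)) :
    ∃ b ∈ A, ∃ t, ∃ c ∈ A, a = b * t * c := by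
  have hpos : 0 < subK k (A.indicator 1) a := by
    refine lt_min ?_ (by linarith)
    simp only [Set.indicator_of_mem ha, Pi.one_apply, zero_lt_one]
  rw [hA] at hpos
  obtain ⟨b, t, c, rfl, hb, -, hc⟩ := exists_eq_mul_mul_of_lt_prodK_prodK le_rfl hpos
  exact ⟨b, Set.mem_of_indicator_ne_zero hb.ne', t, c, Set.mem_of_indicator_ne_zero hc.ne', rfl⟩

theorem regularAG_of_forall_fuzzyLeftIdealK (hS : LeftInvertive S) (hk : k < 1) {e : S}
    (he : ∀ x : S, e * x = x)
    (h : ∀ f : S → ℝ, IsFuzzy f → FuzzyLeftIdealK k f →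
      subK k f = prodK k (prodK k f (fuzzyOne S)) f) : RegularAG S := by
  intro a
  have hideal : ∀ s, ∀ b ∈ Set.range (· * a), s * b ∈ Set.range (· * a) := by
    rintro s _ ⟨t, rfl⟩
    exact ⟨s * e * t, (hS.mul_mul_eq_mul_leftId_mul he s t a).symm⟩
  obtain ⟨_, ⟨s, rfl⟩, t, _, ⟨u, rfl⟩, ha⟩ :=
    exists_eq_mul_mul_of_subK_indicator_one_eq hk (A := Set.range (· * a)) ⟨e, he a⟩
      (h _ (isFuzzy_indicator_one _) (fuzzyLeftIdealK_indicator_one hideal))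
  exact hS.exists_eq_mul_mul_self_of_eq_mul_mul_mul_mul he ha

end FuzzyLeftIdeal

theorem regular_tfae_subK_eq_general {S : Type*} [Mul S] (hS : LeftInvertive S)
    {k : ℝ} (hk : k < 1) {e : S} (he : ∀ x : S, e * x = x) :
    (RegularAG S ↔
      ∀ f : S → ℝ, IsFuzzy f → FuzzyGenBiIdealK k f →
        subK k f = prodK k (prodK k f (fuzzyOne S)) f) ∧
    (RegularAG S ↔
      ∀ f : S → ℝ, IsFuzzy f → FuzzyBiIdealK k f →
        subK k f = prodK k (prodK k f (fuzzyOne S)) f) ∧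
    ((∀ s a : S, ∃ w, s * a = a * w) →
      (RegularAG S ↔
        ∀ f : S → ℝ, IsFuzzy f → FuzzyQuasiIdealK k f →
          subK k f = prodK k (prodK k f (fuzzyOne S)) f)) := by
  have regular_of := regularAG_of_forall_fuzzyLeftIdealK hS hk he
  refine ⟨⟨fun hreg f hf hb => hb.subK_eq_prodK hreg hf, fun h => ?_⟩,
    ⟨fun hreg f hf hb => hb.2.subK_eq_prodK hreg hf, fun h => ?_⟩,
    fun hSa => ⟨fun hreg f hf hq => ?_, fun h => ?_⟩⟩
  · exact regular_of fun f hf hl => h f hf hl.fuzzyBiIdealK.2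
  · exact regular_of fun f hf hl => h f hf hl.fuzzyBiIdealK
  · exact (hq.fuzzyGenBiIdealK hS hSa fun x => (hf x).2).subK_eq_prodK hreg hf
  · exact regular_of fun f hf hl => h f hf (hl.fuzzyQuasiIdealK fun x => (hf x).1)

/-- for a weakly regular AG-groupoid `S` with left identity, the following
are equivalent: (i) `S` is regular; (ii) `f_k = (f ∘_k 1) ∘_k f` for every
`(∈,∈∨q_k)`-fuzzy generalized bi-ideal; (iii) the same for every `(∈,∈∨q_k)`-fuzzy
bi-ideal; (iv) the same for every `(∈,∈∨q_k)`-fuzzy quasi-ideal. -/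
theorem regular_tfae_subK_eq {S : Type*} [Mul S] (hS : LeftInvertive S)
    (k : ℝ) (hk0 : 0 ≤ k) (hk1 : k < 1)
    (e : S) (he : ∀ x : S, e * x = x) (hwr : WeaklyRegular S) :
    (RegularAG S ↔
      ∀ f : S → ℝ, IsFuzzy f → FuzzyGenBiIdealK k f →
        subK k f = prodK k (prodK k f (fuzzyOne S)) f) ∧
    (RegularAG S ↔
      ∀ f : S → ℝ, IsFuzzy f → FuzzyBiIdealK k f →
        subK k f = prodK k (prodK k f (fuzzyOne S)) f) ∧
    (RegularAG S ↔
      ∀ f : S → ℝ, IsFuzzy f → FuzzyQuasiIdealK k f →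
        subK k f = prodK k (prodK k f (fuzzyOne S)) f) := by
  obtain ⟨hgen, hbi, hquasi⟩ := regular_tfae_subK_eq_general hS hk1 he
  exact ⟨hgen, hbi, hquasi (hwr.exists_mul_eq_mul hS he)⟩
end
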